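/- Let ζ be a partition satisfying ζ_{2i−1} − ζ_{2i} ≤ 1 for all i ≥ 1, let ξ be a partition with all terms even satisfying ξ_{2i} = ξ_{2i+1} for all i ≥ 1, and let π = ζ + ξ be their termwise sum. Then the number of indices i ≥ 1 for which π_{2i−1} + π_{2i} is odd equals the number of odd parts of the conjugate ζ′, and consequently ξ₁ = 𝒪(π′) − #{i ≥ 1 : π_{2i−1} + π_{2i} is odd}. -/

import Mathlib

/-- A partition, modeled as a nonincreasing function `ℕ → ℕ` with only finitely many
nonzero terms. -/
def IsPartitionFun (f : ℕ → ℕ) : Prop :=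
  (∀ i j, i ≤ j → f j ≤ f i) ∧ ∃ N, ∀ i, N ≤ i → f i = 0

/-- `𝒪(f)`: the number of odd parts of the partition `f`. -/
noncomputable def oddParts (f : ℕ → ℕ) : ℕ := {i | Odd (f i)}.ncard

/-- The conjugate partition: its zero-based `i`-th term is the number of parts
that are at least `i+1`. -/
noncomputable def conjFun (f : ℕ → ℕ) : ℕ → ℕ := fun i => {j | i + 1 ≤ f j}.ncard

/-!
With zero-based indices, `f′ₖ` is odd exactly when `k` lies in one of the disjoint intervals
`[f₂ᵢ₊₁, f₂ᵢ)`, so `𝒪(f′)` is the alternating sum `∑ (f₂ᵢ - f₂ᵢ₊₁)`, which is additive in `f`.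
For `ζ` every summand is `0` or `1`, so the sum counts the pairs of terms with odd sum, and adding
the even terms of `ξ` does not change these pairs. Since `ξ₂ᵢ₊₁ = ξ₂ᵢ₊₂`, every nonzero
part of `ξ′` is odd, so `𝒪(ξ′) = ξ₀`. Hence `𝒪(π′) = 𝒪(ζ′) + ξ₀`.
-/

theorem pairwise_disjoint_Ico_of_antitone {α : Type*} [Preorder α] [LocallyFiniteOrder α]
    {f : ℕ → α} (hf : Antitone f) :
    Pairwise (Function.onFun Disjoint fun i => Finset.Ico (f (2 * i + 1)) (f (2 * i))) := by
  intro i j hij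
  rw [Function.onFun, ← Finset.disjoint_coe, Finset.coe_Ico, Finset.coe_Ico]
  exact hf.pairwise_disjoint_on_Ico_succ (by omega : 2 * i ≠ 2 * j)

namespace IsPartitionFun

variable {f g : ℕ → ℕ}

theorem antitone (hf : IsPartitionFun f) : Antitone f := fun i j hij => hf.1 i j hij

theorem finite_support (hf : IsPartitionFun f) : f.support.Finite := by
  obtain ⟨N, hN⟩ := hf.2
  refine (Set.finite_Iio N).subset fun i hi => ?_
  by_contra hle
  exact hi (hN i (not_lt.mp hle))

theorem add (hf : IsPartitionFun f) (hg : IsPartitionFun g) : IsPartitionFun (f + g) := by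
  obtain ⟨M, hM⟩ := hf.2
  obtain ⟨N, hN⟩ := hg.2
  refine ⟨fun i j hij => add_le_add (hf.1 i j hij) (hg.1 i j hij), max M N, fun i hi => ?_⟩
  simp [hM i (le_of_max_le_left hi), hN i (le_of_max_le_right hi)]

theorem lt_conjFun_iff (hf : IsPartitionFun f) (j k : ℕ) : j < conjFun f k ↔ k < f j := by
  have isLowerSet : IsLowerSet {j | k < f j} := fun _ _ hle hlt => hlt.trans_le (hf.antitone hle)
  obtain ⟨N, hN⟩ := hf.2
  rcases isLowerSet.eq_univ_or_Iio with huniv | ⟨c, hc⟩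
  · have hNmem : N ∈ {j | k < f j} := huniv ▸ Set.mem_univ N
    simp [hN N le_rfl] at hNmem
  · have conj_eq : conjFun f k = c := by
      change {j | k < f j}.ncard = c
      rw [hc, Set.ncard_Iio_nat]
    rw [conj_eq]
    exact (Set.ext_iff.mp hc j).symm

theorem odd_conjFun_iff (hf : IsPartitionFun f) (k : ℕ) :
    Odd (conjFun f k) ↔ ∃ i, k ∈ Finset.Ico (f (2 * i + 1)) (f (2 * i)) := by
  refine exists_congr fun i => ?_
  have lt_even := hf.lt_conjFun_iff (2 * i) k
  have lt_odd := hf.lt_conjFun_iff (2 * i + 1) k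
  rw [Finset.mem_Ico]
  omega

theorem finite_support_sub (hf : IsPartitionFun f) :
    (Function.support fun i => f (2 * i) - f (2 * i + 1)).Finite := by
  refine (hf.finite_support.preimage (f := (2 * ·)) (by simp)).subset fun i hi => ?_
  simp only [Function.mem_support, Set.mem_preimage] at hi ⊢
  omega

theorem oddParts_conjFun_eq_finsum (hf : IsPartitionFun f) :
    oddParts (conjFun f) = ∑ᶠ i, (f (2 * i) - f (2 * i + 1)) := by
  have odd_set_eq : {k | Odd (conjFun f k)} = (hf.finite_support_sub.toFinset.biUnion
      fun i => Finset.Ico (f (2 * i + 1)) (f (2 * i)) : Finset ℕ) := by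
    ext k
    simp only [Set.mem_ofPred_eq, hf.odd_conjFun_iff, Finset.mem_coe, Finset.mem_biUnion,
      Set.Finite.mem_toFinset, Function.mem_support, Finset.mem_Ico]
    exact exists_congr fun i => by omega
  rw [oddParts, odd_set_eq, Set.ncard_coe_finset,
    Finset.card_biUnion ((pairwise_disjoint_Ico_of_antitone hf.antitone).set_pairwise _),
    finsum_eq_sum _ hf.finite_support_sub]
  simp only [Nat.card_Ico]

theorem oddParts_conjFun_add (hf : IsPartitionFun f) (hg : IsPartitionFun g) :
    oddParts (conjFun (f + g)) = oddParts (conjFun f) + oddParts (conjFun g) := by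
  rw [(hf.add hg).oddParts_conjFun_eq_finsum, hf.oddParts_conjFun_eq_finsum,
    hg.oddParts_conjFun_eq_finsum,
    ← finsum_add_distrib hf.finite_support_sub hg.finite_support_sub]
  refine finsum_congr fun i => ?_
  exact tsub_add_tsub_comm (hf.antitone (Nat.le_succ _)) (hg.antitone (Nat.le_succ _)) |>.symm

theorem oddParts_conjFun_eq_ncard (hf : IsPartitionFun f)
    (hstep : ∀ i, f (2 * i) ≤ f (2 * i + 1) + 1) :
    oddParts (conjFun f) = {i | Odd (f (2 * i) + f (2 * i + 1))}.ncard := by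
  have odd_iff_sub_ne_zero (i : ℕ) :
      Odd (f (2 * i) + f (2 * i + 1)) ↔ f (2 * i) - f (2 * i + 1) ≠ 0 := by
    have hanti : f (2 * i + 1) ≤ f (2 * i) := hf.antitone (Nat.le_succ _)
    have := hstep i
    rw [Nat.odd_iff]
    omega
  have odd_set_eq : {i | Odd (f (2 * i) + f (2 * i + 1))} =
      Function.support fun i => f (2 * i) - f (2 * i + 1) := Set.ext odd_iff_sub_ne_zero
  rw [hf.oddParts_conjFun_eq_finsum, odd_set_eq, finsum_eq_sum _ hf.finite_support_sub,
    Set.ncard_eq_toFinset_card _ hf.finite_support_sub, Finset.card_eq_sum_ones]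
  refine Finset.sum_congr rfl fun i hi => ?_
  rw [Set.Finite.mem_toFinset, Function.mem_support] at hi
  have := hstep i
  omega

theorem oddParts_conjFun_eq_apply_zero (hf : IsPartitionFun f)
    (hpair : ∀ i, f (2 * i + 1) = f (2 * i + 2)) : oddParts (conjFun f) = f 0 := by
  have odd_iff_lt (k : ℕ) : Odd (conjFun f k) ↔ k < f 0 := by
    rw [← hf.lt_conjFun_iff]
    refine ⟨Odd.pos, fun hpos => ?_⟩
    by_contra heven
    obtain ⟨m, hm⟩ : ∃ m, conjFun f k = 2 * m + 2 := by
      obtain ⟨n, hn⟩ := Nat.not_odd_iff_even.mp heven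
      exact ⟨n - 1, by omega⟩
    have hlt := hf.lt_conjFun_iff (2 * m + 1) k
    rw [hpair, ← hf.lt_conjFun_iff] at hlt
    omega
  have odd_set_eq : {k | Odd (conjFun f k)} = Set.Iio (f 0) := Set.ext odd_iff_lt
  rw [oddParts, odd_set_eq, Set.ncard_Iio_nat]

end IsPartitionFun

/-- Let `ζ` be a partition with `ζ_{2i−1} − ζ_{2i} ≤ 1` for all `i ≥ 1`, let `ξ` be a
partition with all terms even and `ξ_{2i} = ξ_{2i+1}` for all `i ≥ 1`, and let
`π = ζ + ξ` termwise.  Then the number of indices `i ≥ 1` with `π_{2i−1} + π_{2i}` odd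
(zero-based: `π(2i) + π(2i+1)` odd) equals `𝒪(ζ′)`, and consequently
`ξ₁ = 𝒪(π′) − #{i ≥ 1 : π_{2i−1} + π_{2i} odd}`. -/
theorem xi_one_recovery (zeta xi : ℕ → ℕ)
    (hzeta : IsPartitionFun zeta) (hC : ∀ i, zeta (2 * i) ≤ zeta (2 * i + 1) + 1)
    (hxi : IsPartitionFun xi) (hxieven : ∀ i, Even (xi i))
    (hD : ∀ i, xi (2 * i + 1) = xi (2 * i + 2))
    (pi : ℕ → ℕ) (hpi : ∀ i, pi i = zeta i + xi i) :
    {i : ℕ | Odd (pi (2 * i) + pi (2 * i + 1))}.ncard = oddParts (conjFun zeta) ∧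
    xi 0 = oddParts (conjFun pi) - {i : ℕ | Odd (pi (2 * i) + pi (2 * i + 1))}.ncard := by
  obtain rfl : pi = zeta + xi := funext hpi
  have odd_add_iff (i : ℕ) : Odd ((zeta + xi) (2 * i) + (zeta + xi) (2 * i + 1)) ↔
      Odd (zeta (2 * i) + zeta (2 * i + 1)) := by
    rw [Pi.add_apply, Pi.add_apply, add_add_add_comm]
    exact Nat.odd_add.trans (iff_true_right ((hxieven _).add (hxieven _)))
  have ncard_eq : {i | Odd ((zeta + xi) (2 * i) + (zeta + xi) (2 * i + 1))}.ncard =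
      oddParts (conjFun zeta) := by
    simp only [odd_add_iff, hzeta.oddParts_conjFun_eq_ncard hC]
  refine ⟨ncard_eq, ?_⟩
  rw [ncard_eq, hzeta.oddParts_conjFun_add hxi, hxi.oddParts_conjFun_eq_apply_zero hD,
    Nat.add_sub_cancel_left]
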